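/- Let d ≥ 3 be a fixed integer. There exists δ₀ > 0 such that for every δ ∈ (0, δ₀) there exists a constant c(δ) > 0 with the following property: for every prime p with gcd(p,d) = 1 and every p×p symmetric real matrix [𝔪_{ij}]_{0≤i,j≤p−1} with nonnegative entries and Σ_{i,j} 𝔪_{ij} = 1, setting 𝔫_i = Σ_{j=0}^{p−1} 𝔪_{ij} and 𝔪_i = (𝔪_{i0},…,𝔪_{i,p−1}), if max_{0≤i,j≤p−1} |𝔪_{ij} − 1/p²| > δ/p² and 𝔪_{00} < 1 − δ/p, then I(𝔪) ≤ −c(δ)/p², where I(𝔪) = (d−1)·ln p + (d/2)·Σ_{i,j=0}^{p−1} 𝔪_{ij}·ln 𝔪_{ij} − Σ_{j=0}^{p−1} 𝔫_j·ln 𝔫_j + Σ_{j=0}^{p−1} inf_{t ∈ ℝ^p} ( 𝔫_j·ln( p^{−(d−1)} Σ_{a ∈ Z_{d,p}} exp(⟨t, Φ(a)⟩) ) − d·⟨t, 𝔪_j⟩ ), with the convention 0·ln 0 = 0. -/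

import Mathlib

open Finset

/-- The counting map `Φ` : the `j`-th coordinate of `Φ(a)` is `#{r : a r = j}`. -/
def Phi {d p : ℕ} (a : Fin d → ZMod p) (j : ZMod p) : ℕ :=
  (Finset.univ.filter (fun r : Fin d => a r = j)).card

theorem sum_Z {p : ℕ} [Fact p.Prime] (n : ℕ) (r : Fin (n+1)) (F : (Fin (n+1) → ZMod p) → ℝ) :
    ∑ a ∈ Finset.univ.filter (fun a : Fin (n+1) → ZMod p => ∑ r, a r = 0), F a
      = ∑ b : Fin n → ZMod p, F (r.insertNth (-∑ i, b i) b) := by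
  refine Finset.sum_nbij' (fun a => r.removeNth a) (fun b => r.insertNth (-∑ i, b i) b)
    ?_ ?_ ?_ ?_ ?_
  · intro a _; simp
  · intro b _; simp [Fin.sum_univ_succAbove _ r]
  · intro a ha
    simp only [Finset.mem_filter, Finset.mem_univ, true_and] at ha
    rw [Fin.sum_univ_succAbove _ r] at ha
    have : -∑ i, r.removeNth a i = a r := by
      simp only [Fin.removeNth]
      exact (eq_neg_of_add_eq_zero_left ha).symm
    rw [this]; simp
  · intro b _; simp
  · intro a ha
    simp only [Finset.mem_filter, Finset.mem_univ, true_and] at ha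
    rw [Fin.sum_univ_succAbove _ r] at ha
    have : -∑ i, r.removeNth a i = a r := by
      simp only [Fin.removeNth]
      exact (eq_neg_of_add_eq_zero_left ha).symm
    rw [this]; simp

theorem amgm_stab (n : ℕ) (z : Fin (n+2) → ℝ) (hz : ∀ i, 0 ≤ z i) (w : ℝ) (hw : 0 ≤ w)
    (h : w ^ (n+2) = ∏ i, z i) :
    ((n+2 : ℕ) : ℝ) * w ≤ ∑ i, z i - (√(z 0) - √(z 1))^2 := by
  set s := √(z 0) * √(z 1) with hs
  have hs0 : 0 ≤ s := by positivity
  let z' : Fin (n+2) → ℝ := Fin.cons s (Fin.cons s (fun i => z i.succ.succ))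
  have hz' : ∀ i, 0 ≤ z' i := by
    intro i
    refine Fin.cases ?_ (fun i => ?_) i
    · exact hs0
    · refine Fin.cases ?_ (fun i => ?_) i
      · exact hs0
      · exact hz _
  have h0 := Real.sq_sqrt (hz 0)
  have h1 := Real.sq_sqrt (hz 1)
  have hss : s * s = z 0 * z 1 := by rw [hs, ← h0, ← h1]; simp; ring
  have hprod : ∏ i, z' i = ∏ i, z i := by
    rw [Fin.prod_univ_succ, Fin.prod_univ_succ, Fin.prod_univ_succ z, Fin.prod_univ_succ (fun i : Fin (n+1) => z i.succ)]
    simp only [z', Fin.cons_zero, Fin.cons_succ]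
    have : z (Fin.succ 0) = z 1 := rfl
    rw [this]
    linear_combination (∏ i : Fin n, z i.succ.succ) * hss
  have hsum : ∑ i, z' i = ∑ i, z i - (√(z 0) - √(z 1))^2 := by
    rw [Fin.sum_univ_succ, Fin.sum_univ_succ, Fin.sum_univ_succ z, Fin.sum_univ_succ (fun i : Fin (n+1) => z i.succ)]
    simp only [z', Fin.cons_zero, Fin.cons_succ]
    have : z (Fin.succ 0) = z 1 := rfl
    rw [this]
    nlinarith
  have key := Real.geom_mean_le_arith_mean_weighted Finset.univ (fun _ => ((n+2 : ℕ) : ℝ)⁻¹) z'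
    (fun _ _ => by positivity) (by simp; field_simp) (fun i _ => hz' i)
  rw [Real.finsetProd_rpow _ _ (fun i _ => hz' i), hprod, ← h,
    Real.pow_rpow_inv_natCast hw (by omega), ← Finset.mul_sum, hsum] at key
  have hN : (0:ℝ) < ((n+2 : ℕ) : ℝ) := by positivity
  calc _ ≤ ((n+2 : ℕ) : ℝ) * (((n+2 : ℕ) : ℝ)⁻¹ * (∑ i, z i - (√(z 0) - √(z 1))^2)) := by gcongr
    _ = _ := by field_simp

/-- deficit functional -/
noncomputable def Kf {p : ℕ} [Fact p.Prime] (e : ℕ) (q : ZMod p → ℝ) : ℝ :=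
  ∑ a ∈ Finset.univ.filter (fun a : Fin (e+3) → ZMod p => ∑ r, a r = 0),
    (∏ s : Fin (e+1), q (a s.succ.succ)) * (√(q (a 1)) - √(q (a 0)))^2

theorem exp_Phi {p : ℕ} [Fact p.Prime] {d : ℕ} (t : ZMod p → ℝ) (a : Fin d → ZMod p) :
    Real.exp (∑ k : ZMod p, t k * (Phi a k : ℝ)) = ∏ s, Real.exp (t (a s)) := by
  rw [← Real.exp_sum]
  congr 1
  rw [← Finset.sum_fiberwise_of_maps_to (s := univ) (t := univ) (g := a) (fun _ _ => mem_univ _)]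
  refine Finset.sum_congr rfl fun k _ => ?_
  rw [Finset.sum_congr rfl (g := fun _ => t k)]
  · simp [Phi, mul_comm]
  · intro x hx; simp at hx; rw [hx]

theorem Y_bound {p : ℕ} [Fact p.Prime] (e : ℕ) (q : ZMod p → ℝ) (hq : ∀ k, 0 < q k)
    (hs : ∑ k, q k = 1) :
    ∑ a ∈ Finset.univ.filter (fun a : Fin (e+3) → ZMod p => ∑ r, a r = 0),
      Real.exp (∑ k : ZMod p, (((e:ℝ)+2)/(e+3) * Real.log (q k)) * (Phi a k : ℝ))
      ≤ 1 - Kf e q / (e+3) := by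
  have hpt : ∀ a : Fin (e+3) → ZMod p, 
      ((e+1+2 : ℕ):ℝ) * Real.exp (∑ k : ZMod p, (((e:ℝ)+2)/(e+3) * Real.log (q k)) * (Phi a k : ℝ))
      ≤ ∑ r : Fin (e+3), ∏ s, q (a (r.succAbove s)) - 
        (∏ s : Fin (e+1), q (a s.succ.succ)) * (√(q (a 1)) - √(q (a 0)))^2 := by
    intro a
    have := amgm_stab (e+1) (fun r : Fin (e+1+2) => ∏ s, q (a (r.succAbove s)))
      (fun r => prod_nonneg fun s _ => (hq _).le)
      (Real.exp (∑ k : ZMod p, (((e:ℝ)+2)/(e+3) * Real.log (q k)) * (Phi a k : ℝ)))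
      (Real.exp_nonneg _) ?_
    · refine this.trans (le_of_eq ?_)
      congr 1
      have e0 : ∏ s, q (a ((0 : Fin (e+3)).succAbove s)) = q (a 1) * ∏ s : Fin (e+1), q (a s.succ.succ) := by
        rw [Fin.prod_univ_succ]; simp
      have e1 : ∏ s, q (a ((1 : Fin (e+3)).succAbove s)) = q (a 0) * ∏ s : Fin (e+1), q (a s.succ.succ) := by
        rw [Fin.prod_univ_succ]; simp
      have hR : 0 ≤ ∏ s : Fin (e+1), q (a s.succ.succ) := prod_nonneg fun s _ => (hq _).le
      erw [e0, e1]
      rw [Real.sqrt_mul (hq _).le, Real.sqrt_mul (hq _).le]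
      have := Real.sq_sqrt hR
      rw [← this]; simp; ring
    · rw [exp_Phi, ← Finset.prod_pow]
      have h1 : ∀ k : ZMod p, Real.exp (((e:ℝ)+2)/(e+3) * Real.log (q k)) ^ (e+1+2) = q k ^ (e+2) := by
        intro k
        rw [← Real.exp_nat_mul]
        have : ((e+1+2 : ℕ):ℝ) * (((e:ℝ)+2)/(e+3) * Real.log (q k)) = ((e+2 : ℕ):ℝ) * Real.log (q k) := by
          push_cast
          have : (e:ℝ)+3 ≠ 0 := by positivity
          field_simp; ring
        rw [this, Real.exp_nat_mul, Real.exp_log (hq k)]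
      simp only [h1]
      have h2 : ∀ r : Fin (e+3), q (a r) * ∏ s, q (a (r.succAbove s)) = ∏ s, q (a s) := by
        intro r; rw [← Fin.prod_univ_succAbove (fun s => q (a s)) r]
      have h3 : ∏ r : Fin (e+3), (q (a r) * ∏ s, q (a (r.succAbove s))) = (∏ s, q (a s)) ^ (e+3) := by
        simp only [h2]; simp
      rw [Finset.prod_mul_distrib, pow_succ'] at h3
      have hne : ∏ s, q (a s) ≠ 0 := (prod_pos fun s _ => hq _).ne'
      rw [Finset.prod_pow]
      exact (mul_left_cancel₀ hne h3).symm
  have hsum : ∑ a ∈ Finset.univ.filter (fun a : Fin (e+3) → ZMod p => ∑ r, a r = 0),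
      ∑ r : Fin (e+3), ∏ s, q (a (r.succAbove s)) = e + 3 := by
    rw [Finset.sum_comm]
    have : ∀ r : Fin (e+3), ∑ a ∈ Finset.univ.filter (fun a : Fin (e+3) → ZMod p => ∑ r, a r = 0),
      ∏ s, q (a (r.succAbove s)) = 1 := by
      intro r
      rw [sum_Z (e+2) r]
      simp only [Fin.insertNth_apply_succAbove]
      rw [← Fintype.sum_pow, hs, one_pow]
    simp [this]
  have := Finset.sum_le_sum (s := Finset.univ.filter (fun a : Fin (e+3) → ZMod p => ∑ r, a r = 0))
    (fun a _ => hpt a)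
  rw [Finset.sum_sub_distrib, hsum, ← Finset.mul_sum] at this
  change _ ≤ (e:ℝ) + 3 - Kf e q at this
  have h3 : (0:ℝ) < (e:ℝ)+3 := by positivity
  push_cast at this
  rw [show (e:ℝ)+1+2 = e+3 by ring] at this
  rw [show 1 - Kf e q / (e+3) = (e+3 - Kf e q)/(e+3) by field_simp]
  rw [le_div_iff₀ h3]
  linarith
open scoped Pointwise in

theorem D_stab {p : ℕ} [Fact p.Prime] (g : ZMod p → ℝ) (hg : ∀ u, 0 ≤ g u)
    (hs : ∑ u, g u ^ 2 = 1) (b : ZMod p) (K : ℝ) (hK : K ≤ 1 / 400000)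
    (hb : ∑ x, g x ^ 2 * ∑ u, (g (b - x - u) - g u)^2 ≤ K) :
    (∀ u, (g u - √(1/p))^2 ≤ 8 * K) ∨ ∃ y, 1 - g y ^ 2 ≤ 4000 * K := by
  have hp : (0:ℝ) < p := by exact_mod_cast (Fact.out : p.Prime).pos
  set D : ZMod p → ℝ := fun h => ∑ u, (g (u + h) - g u)^2 with hD
  set A : ZMod p → ℝ := fun h => ∑ u, g (u + h) * g u with hA
  have hshift : ∀ h, ∑ u, g (u + h)^2 = 1 := fun h => by
    rw [← hs]; exact Fintype.sum_equiv (Equiv.addRight h) _ _ (fun u => rfl)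
  have hDA : ∀ h, D h = 2 - 2 * A h := by
    intro h
    have : ∀ u, (g (u + h) - g u)^2 = g (u+h)^2 + g u ^2 - 2 * (g (u + h) * g u) := by intro u; ring
    simp only [hD, hA, this, Finset.sum_sub_distrib, Finset.sum_add_distrib, ← Finset.mul_sum, hshift, hs]
    ring
  have hD0 : ∀ h, 0 ≤ D h := fun h => sum_nonneg fun u _ => sq_nonneg _
  have hDadd : ∀ h k, D (h + k) ≤ 2 * D h + 2 * D k := by
    intro h k
    have e1 : D k = ∑ u, (g (u + h + k) - g (u + h))^2 :=
      (Fintype.sum_equiv (Equiv.addRight h) _ _ (fun u => rfl)).symm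
    rw [e1]
    simp only [hD, Finset.mul_sum, ← Finset.sum_add_distrib]
    refine sum_le_sum fun u _ => ?_
    rw [← add_assoc]
    nlinarith [sq_nonneg ((g (u + h + k) - g (u + h)) - (g (u + h) - g u))]
  set G : ZMod p → ℝ := fun w => ∑ u, (g (w - u) - g u)^2 with hG
  have hDG : ∀ x y, D (x - y) ≤ 2 * G (b - x) + 2 * G (b - y) := by
    intro x y
    have e1 : G (b - y) = ∑ u, (g (b - y - (u + (x - y))) - g (u + (x - y)))^2 :=
      (Fintype.sum_equiv (Equiv.addRight (x-y)) _ _ (fun u => rfl)).symm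
    rw [e1]
    simp only [hD, hG, Finset.mul_sum, ← Finset.sum_add_distrib]
    refine sum_le_sum fun u _ => ?_
    rw [show b - y - (u + (x-y)) = b - x - u by ring]
    nlinarith [sq_nonneg ((g (b - x - u) - g u) + (g (b - x - u) - g (u + (x - y))))]
  have hGK : ∑ x, g x ^ 2 * G (b - x) ≤ K := hb
  have hDD : ∑ y, g y ^ 2 * ∑ x, g x ^ 2 * D (x - y) ≤ 4 * K := by
    calc ∑ y, g y ^ 2 * ∑ x, g x ^ 2 * D (x - y) 
        ≤ ∑ y, g y ^ 2 * ∑ x, g x ^ 2 * (2 * G (b - x) + 2 * G (b - y)) := by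
          gcongr with y _ x _; exact hDG x y
      _ = ∑ y, (g y ^ 2 * (2 * ∑ x, g x ^ 2 * G (b - x)) + 2 * (g y ^ 2 * G (b - y))) := by
          refine sum_congr rfl fun y _ => ?_
          have : ∑ x, g x ^ 2 * (2 * G (b - x) + 2 * G (b - y)) 
              = 2 * ∑ x, g x ^ 2 * G (b - x) + 2 * G (b - y) := by
            simp only [mul_add, Finset.sum_add_distrib, ← Finset.sum_mul, hs, Finset.mul_sum]
            congr 1
            · exact sum_congr rfl fun x _ => by ring
            · ring
          rw [this]; ring
      _ = 4 * ∑ x, g x ^ 2 * G (b - x) := by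
          rw [Finset.sum_add_distrib, ← Finset.sum_mul, hs, ← Finset.mul_sum]; ring
      _ ≤ 4 * K := by linarith
  obtain ⟨y, hy⟩ : ∃ y, ∑ x, g x ^ 2 * D (x - y) ≤ 4 * K := by
    by_contra! hcon
    obtain ⟨y0, hy0⟩ : ∃ y0, 0 < g y0 ^ 2 := by
      by_contra! h0
      have : ∑ u, g u ^ 2 ≤ 0 := sum_nonpos fun u _ => h0 u
      linarith
    have : ∑ y, g y ^ 2 * (4 * K) < ∑ y, g y ^ 2 * ∑ x, g x ^ 2 * D (x - y) := by
      refine sum_lt_sum (fun y _ => ?_) ⟨y0, mem_univ _, ?_⟩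
      · exact mul_le_mul_of_nonneg_left (hcon y).le (sq_nonneg _)
      · exact mul_lt_mul_of_pos_left (hcon y0) hy0
    rw [← Finset.sum_mul, hs] at this
    linarith
  have hK0 : 0 ≤ K := by
    have : 0 ≤ ∑ x, g x ^ 2 * D (x - y) := sum_nonneg fun x _ => mul_nonneg (sq_nonneg _) (hD0 _)
    linarith
  set H : Finset (ZMod p) := univ.filter (fun h => D h ≤ 1/1000) with hH
  set H4 : Finset (ZMod p) := univ.filter (fun h => D h ≤ 1/250) with hH4
  set X : Finset (ZMod p) := univ.filter (fun x => D (x - y) ≤ 1/1000) with hX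
  have hXcard : X.card = H.card := by
    refine Finset.card_nbij' (fun x => x - y) (fun h => h + y) ?_ ?_ ?_ ?_
    · intro x hx; simpa [hX, hH] using hx
    · intro x hx; simpa [hX, hH] using hx
    · intro x _; simp
    · intro x _; simp
  have hXc : ∑ x ∈ univ.filter (fun x => ¬ D (x - y) ≤ 1/1000), g x ^ 2 ≤ 4000 * K := by
    calc _ ≤ ∑ x ∈ univ.filter (fun x => ¬ D (x - y) ≤ 1/1000), 1000 * (g x ^ 2 * D (x - y)) := by
          refine sum_le_sum fun x hx => ?_
          simp only [mem_filter, mem_univ, true_and, not_le] at hx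
          nlinarith [sq_nonneg (g x)]
      _ ≤ ∑ x, 1000 * (g x ^ 2 * D (x - y)) := by
          refine sum_le_sum_of_subset_of_nonneg (filter_subset _ _) fun x _ _ => ?_
          have := hD0 (x - y)
          positivity
      _ ≤ 4000 * K := by rw [← mul_sum]; linarith
  have hXc' : ∑ u, (if u ∈ X then 0 else g u ^ 2) ≤ 1/100 := by
    have : ∑ u, (if u ∈ X then 0 else g u ^ 2) = ∑ x ∈ univ.filter (fun x => ¬ D (x - y) ≤ 1/1000), g x ^ 2 := by
      rw [Finset.sum_filter]
      refine sum_congr rfl fun u _ => ?_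
      simp only [hX, mem_filter, mem_univ, true_and]
      split_ifs <;> rfl
    rw [this]; linarith
  have hH0 : (0 : ZMod p) ∈ H := by simp [hH, hD]
  have hsub : H + H ⊆ H4 := by
    intro x hx
    obtain ⟨h, hh, k, hk, rfl⟩ := Finset.mem_add.1 hx
    simp only [hH, hH4, mem_filter, mem_univ, true_and] at *
    linarith [hDadd h k]
  -- pointwise lower bound for h ∈ H4
  have hlow : ∀ h ∈ H4, (7/10 : ℝ) ≤ ∑ u, (if u ∈ X then g u else 0) * (if u + h ∈ X then g (u + h) else 0) := by
    intro h hh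
    simp only [hH4, mem_filter, mem_univ, true_and] at hh
    have hAh : 1 - 1/500 ≤ A h := by have := hDA h; linarith
    have hsh : ∑ u, (if u + h ∈ X then 0 else g (u + h) ^ 2) ≤ 1/100 := by
      refine le_trans (le_of_eq ?_) hXc'
      exact Fintype.sum_equiv (Equiv.addRight h) _ (fun u => (if u ∈ X then 0 else g u ^ 2)) (fun u => rfl)
    have hpt : ∀ u, g (u + h) * g u - (5 * (if u ∈ X then 0 else g u ^ 2) + 1/20 * g (u+h)^2)
        - (5 * (if u + h ∈ X then 0 else g (u + h) ^ 2) + 1/20 * g u^2) ≤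
        (if u ∈ X then g u else 0) * (if u + h ∈ X then g (u + h) else 0) := by
      intro u
      have h1 := hg u
      have h2 := hg (u + h)
      split_ifs
      · nlinarith [mul_nonneg h1 h2, sq_nonneg (g u), sq_nonneg (g (u+h))]
      · nlinarith [sq_nonneg (10 * g (u+h) - g u), sq_nonneg (g u), sq_nonneg (g (u+h))]
      · nlinarith [sq_nonneg (10 * g u - g (u+h)), sq_nonneg (g u), sq_nonneg (g (u+h))]
      · nlinarith [sq_nonneg (10 * g u - g (u+h)), sq_nonneg (g u), sq_nonneg (g (u+h))]
    have := Finset.sum_le_sum (s := univ) (fun u _ => hpt u)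
    simp only [Finset.sum_sub_distrib, Finset.sum_add_distrib, ← Finset.mul_sum, hshift, hs] at this
    change A h - _ - _ ≤ _ at this
    linarith
  have hcard : (7/10 : ℝ) * H4.card ≤ H.card := by
    calc (7/10 : ℝ) * H4.card = ∑ h ∈ H4, (7/10 : ℝ) := by simp [mul_comm]
      _ ≤ ∑ h ∈ H4, ∑ u, (if u ∈ X then g u else 0) * (if u + h ∈ X then g (u + h) else 0) := sum_le_sum hlow
      _ ≤ ∑ h, ∑ u, (if u ∈ X then g u else 0) * (if u + h ∈ X then g (u + h) else 0) := by
          refine sum_le_sum_of_subset_of_nonneg (subset_univ _) fun h _ _ => sum_nonneg fun u _ => ?_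
          have h1 := hg u
          have h2 := hg (u + h)
          positivity
      _ = (∑ u ∈ X, g u)^2 := by
          rw [Finset.sum_comm, sq, Finset.sum_mul]
          rw [← Finset.sum_filter_add_sum_filter_not univ (fun u => u ∈ X)]
          have e2 : ∑ u ∈ univ.filter (fun u => ¬ u ∈ X), ∑ h, (if u ∈ X then g u else 0) * (if u + h ∈ X then g (u + h) else 0) = 0 := by
            refine sum_eq_zero fun u hu => ?_
            simp only [mem_filter, mem_univ, true_and] at hu
            simp [hu]
          rw [e2, add_zero]
          rw [show univ.filter (fun u => u ∈ X) = X by ext; simp]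
          refine sum_congr rfl fun u hu => ?_
          rw [← Finset.mul_sum, if_pos hu]
          congr 1
          refine (Fintype.sum_equiv (Equiv.addLeft u) _ (fun v => (if v ∈ X then g v else 0)) (fun v => rfl)).trans ?_
          rw [← Finset.sum_filter]
          rw [show univ.filter (fun u => u ∈ X) = X by ext; simp]
      _ ≤ X.card * ∑ u ∈ X, g u ^ 2 := sq_sum_le_card_mul_sum_sq
      _ ≤ X.card * 1 := by
          gcongr
          rw [← hs]
          exact sum_le_sum_of_subset_of_nonneg (subset_univ _) fun _ _ _ => sq_nonneg _
      _ = H.card := by rw [hXcard, mul_one]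
  have hCD := ZMod.cauchy_davenport (Fact.out : p.Prime) ⟨0, hH0⟩ ⟨0, hH0⟩ (s := H) (t := H)
  have hle := Finset.card_le_card hsub
  have hcard' : 7 * H4.card ≤ 10 * H.card := by
    have : (7:ℝ) * H4.card ≤ 10 * H.card := by linarith
    exact_mod_cast this
  have hHpos : 0 < H.card := card_pos.2 ⟨0, hH0⟩
  by_cases hfull : p ≤ (H + H).card
  · left
    have huniv : H4 = univ := by
      apply Finset.eq_univ_of_card
      rw [ZMod.card]
      refine le_antisymm ?_ (hfull.trans hle)
      have := Finset.card_le_univ H4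
      rwa [ZMod.card] at this
    have hall : ∀ h, 1 - 1/500 ≤ A h := by
      intro h
      have : h ∈ H4 := by rw [huniv]; exact mem_univ _
      simp only [hH4, mem_filter, mem_univ, true_and] at this
      have := hDA h; linarith
    -- sigma lower bound
    have hsig : ∀ h, 1/(2*p) ≤ ∑ u, g (u+h)^2 * g u ^2 := by
      intro h
      have h1 := sq_sum_le_card_mul_sum_sq (s := univ) (f := fun u => g (u+h) * g u)
      rw [card_univ, ZMod.card] at h1
      simp only [mul_pow] at h1
      change (A h)^2 ≤ _ at h1
      have h2 := hall h
      rw [div_le_iff₀ (by positivity)]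
      nlinarith
    have hre : ∑ y, g y ^ 2 * ∑ x, g x ^ 2 * D (x - y) = ∑ h, (∑ u, g (u+h)^2 * g u ^2) * D h := by
      simp only [Finset.sum_mul]
      rw [Finset.sum_comm]
      refine sum_congr rfl fun u _ => ?_
      rw [Finset.mul_sum]
      rw [← Fintype.sum_equiv (Equiv.addLeft u) (fun h => g (u+h)^2 * g u ^2 * D h) _ ]
      intro h
      simp
      ring
    have hSD : ∑ h, D h = 2 * p - 2 * (∑ u, g u)^2 := by
      simp only [hDA, Finset.sum_sub_distrib, ← Finset.mul_sum]
      congr 1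
      · simp [ZMod.card]; ring
      · congr 1
        simp only [hA]
        rw [Finset.sum_comm, sq, Finset.mul_sum]
        refine sum_congr rfl fun u _ => ?_
        rw [← Finset.sum_mul]
        congr 1
        exact Fintype.sum_equiv (Equiv.addLeft u) _ _ (fun v => rfl)
    have h8 : 1/(2*p) * ∑ h, D h ≤ 4 * K := by
      refine le_trans ?_ hDD
      rw [hre, Finset.mul_sum]
      exact sum_le_sum fun h _ => mul_le_mul_of_nonneg_right (hsig h) (hD0 h)
    set v := √(1/(p:ℝ)) with hv
    have hv0 : 0 ≤ v := Real.sqrt_nonneg _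
    have hv2 : v^2 = 1/p := Real.sq_sqrt (by positivity)
    set β := v * ∑ u, g u with hβ
    have hβ0 : 0 ≤ β := mul_nonneg hv0 (sum_nonneg fun u _ => hg u)
    have hβ2 : β^2 = (∑ u, g u)^2 / p := by rw [hβ, mul_pow, hv2]; ring
    have hL : ∑ u, (g u - v)^2 = 2 - 2 * β := by
      have : ∀ u, (g u - v)^2 = g u ^2 - 2 * (v * g u) + v^2 := fun u => by ring
      simp only [this, Finset.sum_add_distrib, Finset.sum_sub_distrib, ← Finset.mul_sum, hs]
      simp [ZMod.card, hv2, hβ]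
      field_simp; ring
    have hL0 : 0 ≤ ∑ u, (g u - v)^2 := sum_nonneg fun u _ => sq_nonneg _
    have hβ3 : 1 - β^2 ≤ 4 * K := by
      rw [hSD] at h8
      rw [hβ2]
      refine le_trans (le_of_eq ?_) h8
      field_simp
    intro u
    calc (g u - v)^2 ≤ ∑ u, (g u - v)^2 := single_le_sum (f := fun u => (g u - v)^2) (fun u _ => sq_nonneg _) (mem_univ u)
      _ ≤ 8 * K := by rw [hL]; nlinarith
  · right
    have h1 : H.card = 1 := by
      rcases min_le_iff.1 hCD with h | h
      · exact absurd h hfull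
      · omega
    have hX1 : X = {y} := by
      obtain ⟨z, hz⟩ := Finset.card_eq_one.1 (hXcard.trans h1)
      have : y ∈ X := by simp [hX, hD]
      rw [hz] at this ⊢
      simp at this; rw [this]
    refine ⟨y, ?_⟩
    refine le_trans (le_of_eq ?_) hXc
    have := Finset.sum_filter_add_sum_filter_not univ (fun x => D (x - y) ≤ 1/1000) (fun x => g x ^ 2)
    rw [hs] at this
    change ∑ x ∈ X, _ + _ = _ at this
    rw [hX1, sum_singleton] at this
    linarith

theorem sum_cons_fn {p : ℕ} [Fact p.Prime] (n : ℕ) (F : (Fin (n+1) → ZMod p) → ℝ) :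
    ∑ b, F b = ∑ u, ∑ c : Fin n → ZMod p, F (Fin.cons u c) := by
  rw [← Fintype.sum_prod_type (f := fun x : ZMod p × (Fin n → ZMod p) => F (Fin.cons x.1 x.2))]
  exact (Fintype.sum_equiv (Fin.consEquiv (fun _ => ZMod p)) _ _ (fun x => rfl)).symm

theorem Kf_eq {p : ℕ} [Fact p.Prime] (e : ℕ) (q : ZMod p → ℝ) :
    Kf e q = ∑ c : Fin e → ZMod p, (∏ s, q (c s)) *
      ∑ x, q x * ∑ u, (√(q (-(∑ i, c i) - x - u)) - √(q u))^2 := by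
  unfold Kf
  rw [sum_Z (e+2) 0, sum_cons_fn]
  simp only [sum_cons_fn e]
  rw [Finset.sum_comm_cycle]
  refine sum_congr rfl fun c _ => ?_
  rw [Finset.sum_comm, Finset.mul_sum]
  refine sum_congr rfl fun x _ => ?_
  rw [Finset.mul_sum, Finset.mul_sum]
  refine sum_congr rfl fun u _ => ?_
  have h1 : ∀ (α : ZMod p) (b : Fin (e+2) → ZMod p),
    (Fin.insertNth (α := fun _ => ZMod p) 0 α b) 1 = b 0 := fun α b => by
      rw [Fin.insertNth_zero']; rfl
  simp only [Fin.insertNth_zero', Fin.cons_succ, Fin.cons_zero]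
  have h2 : ∀ (α : ZMod p) (b : Fin (e+2) → ZMod p),
    (Fin.cons α b : Fin (e+3) → ZMod p) 1 = b 0 := fun α b => rfl
  rw [h2, Fin.prod_univ_succ]
  simp only [Fin.sum_univ_succ, Fin.cons_succ, Fin.cons_zero]
  rw [show -(u + (x + ∑ i, c i)) = -(∑ i, c i) - x - u by ring]
  ring

theorem Kf_nonneg {p : ℕ} [Fact p.Prime] (e : ℕ) (q : ZMod p → ℝ) (hq : ∀ k, 0 ≤ q k) :
    0 ≤ Kf e q := sum_nonneg fun a _ => mul_nonneg (prod_nonneg fun s _ => hq _) (sq_nonneg _)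

theorem K_stab {p : ℕ} [Fact p.Prime] (e : ℕ) (hpe : Nat.gcd p (e+3) = 1)
    (q : ZMod p → ℝ) (hq : ∀ k, 0 ≤ q k) (hs : ∑ k, q k = 1)
    (hK1 : Kf e q ≤ 1/400000) (hK2 : Kf e q < (1/2)^(e+3)) :
    (∀ u, (√(q u) - √(1/p))^2 ≤ 8 * Kf e q) ∨ 1 - q 0 ≤ 4000 * Kf e q := by
  obtain ⟨c, hc⟩ : ∃ c : Fin e → ZMod p,
      ∑ x, q x * ∑ u, (√(q (-(∑ i, c i) - x - u)) - √(q u))^2 ≤ Kf e q := by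
    by_contra! hcon
    have hone : ∑ c : Fin e → ZMod p, (∏ s, q (c s)) = 1 := by
      rw [← Fintype.sum_pow, hs, one_pow]
    have hP : ∀ c : Fin e → ZMod p, 0 ≤ ∏ s, q (c s) := fun c => prod_nonneg fun s _ => hq _
    obtain ⟨c0, hc0⟩ : ∃ c : Fin e → ZMod p, 0 < ∏ s, q (c s) := by
      by_contra! h0
      have : ∑ c : Fin e → ZMod p, (∏ s, q (c s)) ≤ 0 := sum_nonpos fun u _ => h0 u
      linarith
    have : ∑ c : Fin e → ZMod p, (∏ s, q (c s)) * Kf e q < Kf e q := by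
      conv_rhs => rw [Kf_eq]
      refine sum_lt_sum (fun y _ => ?_) ⟨c0, mem_univ _, ?_⟩
      · exact mul_le_mul_of_nonneg_left (hcon y).le (hP y)
      · exact mul_lt_mul_of_pos_left (hcon c0) hc0
    rw [← Finset.sum_mul, hone] at this
    linarith
  have hsq : ∀ u, √(q u)^2 = q u := fun u => Real.sq_sqrt (hq u)
  rcases D_stab (fun u => √(q u)) (fun u => Real.sqrt_nonneg _) (by simpa [hsq] using hs)
    (-(∑ i, c i)) (Kf e q) hK1 (by simpa [hsq] using hc) with h | ⟨y, hy⟩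
  · left; exact h
  · right
    simp only [hsq] at hy
    by_cases hy0 : y = 0
    · rwa [hy0] at hy
    exfalso
    -- the tuple (-(e+2)y, y, ..., y)
    set z : ZMod p := -((e+2 : ℕ) * y) with hz
    have hzy : z ≠ y := by
      intro h
      have h3 : ((e+3 : ℕ) : ZMod p) * y = 0 := by
        rw [hz] at h; push_cast at h ⊢; linear_combination -h
      rcases mul_eq_zero.1 h3 with h3 | h3
      · rw [ZMod.natCast_eq_zero_iff] at h3
        have : p ∣ Nat.gcd p (e+3) := Nat.dvd_gcd dvd_rfl h3
        rw [hpe] at this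
        exact (Fact.out : p.Prime).one_lt.ne' (Nat.dvd_one.1 this)
      · exact hy0 h3
    have hyz : q y + q z ≤ 1 := by
      rw [← hs, ← Finset.sum_pair hzy.symm]
      exact sum_le_sum_of_subset_of_nonneg (subset_univ _) fun _ _ _ => hq _
    have hqy : (81:ℝ)/100 ≤ q y := by linarith
    have hqz : q z ≤ 1/100 := by linarith
    have hgy : (9:ℝ)/10 ≤ √(q y) := Real.le_sqrt_of_sq_le (by norm_num; linarith)
    have hgz : √(q z) ≤ 1/10 := Real.sqrt_le_iff.2 ⟨by norm_num, by norm_num; linarith⟩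
    have hmem : (Fin.cons z (fun _ => y) : Fin (e+3) → ZMod p) ∈
        Finset.univ.filter (fun a : Fin (e+3) → ZMod p => ∑ r, a r = 0) := by
      rw [mem_filter]
      refine ⟨mem_univ _, ?_⟩
      rw [Fin.sum_univ_succ]
      simp only [Fin.cons_zero, Fin.cons_succ, sum_const, card_univ, Fintype.card_fin,
        nsmul_eq_mul, hz]
      ring
    have hle := single_le_sum (f := fun a : Fin (e+3) → ZMod p => 
      (∏ s : Fin (e+1), q (a s.succ.succ)) * (√(q (a 1)) - √(q (a 0)))^2)
      (fun a _ => mul_nonneg (prod_nonneg fun s _ => hq _) (sq_nonneg _)) hmem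
    change _ ≤ Kf e q at hle
    have h2 : (Fin.cons z (fun _ => y) : Fin (e+3) → ZMod p) 1 = y := rfl
    simp only [h2, Fin.cons_succ, Fin.cons_zero, prod_const, card_univ, Fintype.card_fin] at hle
    have h4 : ((1:ℝ)/2)^(e+1) ≤ q y ^ (e+1) := pow_le_pow_left₀ (by norm_num) (by linarith) _
    have h5 : ((1:ℝ)/2)^2 ≤ (√(q y) - √(q z))^2 := pow_le_pow_left₀ (by norm_num) (by linarith) _
    have h6 := mul_le_mul h4 h5 (by positivity) (pow_nonneg (hq y) _)
    rw [← pow_add] at h6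
    linarith

theorem row_bound {p : ℕ} [Fact p.Prime] (e : ℕ) (m : ZMod p → ℝ) (hm : ∀ k, 0 ≤ m k)
    (n : ℝ) (hn : n = ∑ k, m k) :
    (⨅ t : ZMod p → ℝ,
      ((n * Real.log ((p : ℝ) ^ (-(((e+3 : ℕ) : ℤ) - 1)) *
          ∑ a ∈ Finset.univ.filter (fun a : Fin (e+3) → ZMod p => ∑ r, a r = 0),
            Real.exp (∑ k : ZMod p, t k * (Phi a k : ℝ)))
        - ((e+3 : ℕ) : ℝ) * ∑ k : ZMod p, t k * m k : ℝ) : EReal))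
    ≤ ((n * (-((e:ℝ)+2) * Real.log p - Kf e (fun k => m k / n) / (e+3))
        - ((e:ℝ)+2) * ∑ k, m k * Real.log (m k / n) : ℝ) : EReal) := by
  have hp : (0:ℝ) < p := by exact_mod_cast (Fact.out : p.Prime).pos
  have hn0 : 0 ≤ n := hn ▸ sum_nonneg fun k _ => hm k
  rcases hn0.eq_or_lt with h0 | hpos
  · have hmz : ∀ k, m k = 0 := by
      intro k
      exact (sum_eq_zero_iff_of_nonneg (fun k _ => hm k)).1 (hn.symm.trans h0.symm) k (mem_univ k)
    refine iInf_le_of_le 0 ?_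
    simp [← h0, hmz]
  · set q : ZMod p → ℝ := fun k => m k / n with hq
    have hq0 : ∀ k, 0 ≤ q k := fun k => div_nonneg (hm k) hn0
    have hqs : ∑ k, q k = 1 := by
      simp only [hq]; rw [← Finset.sum_div, ← hn, div_self hpos.ne']
    have hcont : Continuous (fun ε : ℝ => n * (-((e:ℝ)+2) * Real.log p - Kf e (fun k => (1-ε) * q k + ε / p) / (e+3))
        - ((e:ℝ)+2) * ∑ k, m k * Real.log (q k)) := by
      unfold Kf; fun_prop
    have hlog : Filter.Tendsto (fun ε : ℝ => ((e:ℝ)+2) * n * Real.log (1-ε)) (nhdsWithin 0 (Set.Ioi 0)) (nhds 0) := by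
      have : ContinuousAt (fun ε : ℝ => ((e:ℝ)+2) * n * Real.log (1-ε)) 0 := by
        refine ContinuousAt.mul continuousAt_const (ContinuousAt.log (by fun_prop) (by norm_num))
      have := this.tendsto.mono_left (nhdsWithin_le_nhds (s := Set.Ioi 0))
      simpa using this
    have hlim := ((hcont.tendsto 0).mono_left (nhdsWithin_le_nhds (s := Set.Ioi 0))).sub hlog
    simp only [sub_zero, one_mul, zero_div, add_zero] at hlim
    have hlim' := (continuous_coe_real_ereal.tendsto _).comp hlim
    refine ge_of_tendsto hlim' ?_
    have hev : ∀ᶠ ε : ℝ in nhdsWithin 0 (Set.Ioi 0), ε ∈ Set.Ioo (0:ℝ) 1 :=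
      Ioo_mem_nhdsGT one_pos
    filter_upwards [hev] with ε hε
    obtain ⟨hε0, hε1⟩ := hε
    set qe : ZMod p → ℝ := fun k => (1-ε) * q k + ε / p with hqe
    have hqe0 : ∀ k, 0 < qe k := fun k => by
      have := hq0 k
      have h1 : 0 < 1 - ε := by linarith
      simp only [hqe]; positivity
    have hqes : ∑ k, qe k = 1 := by
      simp only [hqe, Finset.sum_add_distrib, ← Finset.mul_sum, hqs]
      simp [ZMod.card]; field_simp; ring
    refine iInf_le_of_le (fun k => ((e:ℝ)+2)/(e+3) * Real.log (qe k)) ?_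
    simp only [Function.comp_apply]
    rw [EReal.coe_le_coe_iff]
    have hY := Y_bound e qe hqe0 hqes
    set Y := ∑ a ∈ Finset.univ.filter (fun a : Fin (e+3) → ZMod p => ∑ r, a r = 0),
      Real.exp (∑ k : ZMod p, (((e:ℝ)+2)/(e+3) * Real.log (qe k)) * (Phi a k : ℝ)) with hYdef
    have hYpos : 0 < Y := sum_pos (fun a _ => Real.exp_pos _) ⟨0, by simp⟩
    have hlogY : Real.log Y ≤ - (Kf e qe / (e+3)) := by
      have := Real.log_le_sub_one_of_pos hYpos; linarith
    have hl1 : Real.log ((p : ℝ) ^ (-(((e+3 : ℕ) : ℤ) - 1)) * Y) = -((e:ℝ)+2) * Real.log p + Real.log Y := by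
      rw [Real.log_mul (by positivity) hYpos.ne', Real.log_zpow]
      push_cast; ring
    rw [hl1]
    have h3 : (e:ℝ)+3 ≠ 0 := by positivity
    have hS : ((e+3 : ℕ) : ℝ) * ∑ k : ZMod p, ((e:ℝ)+2)/(e+3) * Real.log (qe k) * m k
        = ((e:ℝ)+2) * ∑ k, m k * Real.log (qe k) := by
      rw [Finset.mul_sum, Finset.mul_sum]
      refine sum_congr rfl fun k _ => ?_
      push_cast; field_simp
    rw [hS]
    have hT : ∑ k, m k * Real.log (q k) + n * Real.log (1-ε) ≤ ∑ k, m k * Real.log (qe k) := by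
      rw [hn, Finset.sum_mul, ← Finset.sum_add_distrib]
      refine sum_le_sum fun k _ => ?_
      rcases (hm k).eq_or_lt with h | h
      · simp [← h]
      · have hqk : 0 < q k := div_pos h hpos
        rw [← mul_add, ← Real.log_mul hqk.ne' (by linarith)]
        refine mul_le_mul_of_nonneg_left (Real.log_le_log (mul_pos hqk (by linarith)) ?_) h.le
        simp only [hqe]
        have : 0 < ε / p := by positivity
        linarith
    have h1 := mul_le_mul_of_nonneg_left hT (show (0:ℝ) ≤ (e:ℝ)+2 by positivity)
    have h2 := mul_le_mul_of_nonneg_left hlogY hn0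
    linarith

theorem kl_pt (m a b : ℝ) (hm : 0 ≤ m) (ha : 0 ≤ a) (hb : 0 ≤ b) (hma : m ≤ a) (hmb : m ≤ b) :
    (√m - √a * √b)^2 + (m - a * b) ≤ m * Real.log m - m * Real.log a - m * Real.log b := by
  rcases hm.eq_or_lt with h | h
  · rw [← h]; simp [mul_pow, Real.sq_sqrt ha, Real.sq_sqrt hb]
  · have ha' : 0 < a := by linarith
    have hb' : 0 < b := by linarith
    have hx : 0 < √a * √b / √m := by positivity
    have hl := Real.log_le_sub_one_of_pos hx
    rw [Real.log_div (by positivity) (by positivity), Real.log_mul (by positivity) (by positivity),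
      Real.log_sqrt ha, Real.log_sqrt hb, Real.log_sqrt hm] at hl
    have h2 := mul_le_mul_of_nonneg_left hl hm
    have h3 : m * (√a * √b / √m - 1) = √m * (√a * √b) - m := by
      have := Real.sq_sqrt hm
      have h4 : √m ≠ 0 := by positivity
      field_simp
      linear_combination (-(√a * √b)) * this
    rw [h3] at h2
    have e1 := Real.sq_sqrt hm
    have e2 := Real.sq_sqrt ha
    have e3 := Real.sq_sqrt hb
    have e4 : (√m - √a * √b)^2 = m - 2 * (√m * (√a * √b)) + a * b := by
      rw [sub_sq, mul_pow, e1, e2, e3]; ring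
    rw [e4]; linarith

theorem real_bound {p : ℕ} [Fact p.Prime] (e : ℕ) (m : ZMod p → ZMod p → ℝ)
    (hsymm : ∀ i j, m i j = m j i) (hm : ∀ i j, 0 ≤ m i j) (hs : ∑ i, ∑ j, m i j = 1)
    (n : ZMod p → ℝ) (hn : ∀ j, n j = ∑ k, m j k) :
    (((e+3:ℕ):ℝ) - 1) * Real.log p + (((e+3:ℕ):ℝ)/2) * ∑ i, ∑ j, m i j * Real.log (m i j)
      - ∑ j, n j * Real.log (n j)
      + ∑ j, (n j * (-((e:ℝ)+2) * Real.log p - Kf e (fun k => m j k / n j) / (e+3))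
        - ((e:ℝ)+2) * ∑ k, m j k * Real.log (m j k / n j))
    ≤ - (1/2 * ∑ i, ∑ j, (√(m i j) - √(n i) * √(n j))^2
        + ∑ j, n j * (Kf e (fun k => m j k / n j) / (e+3))) := by
  have hn1 : ∑ j, n j = 1 := by simp only [hn]; exact hs
  have hmn : ∀ i j, m i j ≤ n i := fun i j => by
    rw [hn]; exact single_le_sum (f := fun j => m i j) (fun k _ => hm i k) (mem_univ j)
  have hn0 : ∀ i, 0 ≤ n i := fun i => by rw [hn]; exact sum_nonneg fun k _ => hm i k
  set S := ∑ i, ∑ j, m i j * Real.log (m i j) with hS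
  set T := ∑ j, n j * Real.log (n j) with hT
  have hrow : ∑ i, ∑ j, m i j * Real.log (n i) = T := by
    refine sum_congr rfl fun i _ => ?_
    rw [← Finset.sum_mul, ← hn]
  have hcol : ∑ i, ∑ j, m i j * Real.log (n j) = T := by
    rw [Finset.sum_comm, ← hrow]
    exact sum_congr rfl fun i _ => sum_congr rfl fun j _ => by rw [hsymm]
  have hKL : ∑ i, ∑ j, (√(m i j) - √(n i) * √(n j))^2 ≤ S - 2 * T := by
    have h1 : ∑ i, ∑ j, ((√(m i j) - √(n i) * √(n j))^2 + (m i j - n i * n j)) ≤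
        ∑ i, ∑ j, (m i j * Real.log (m i j) - m i j * Real.log (n i) - m i j * Real.log (n j)) := by
      refine sum_le_sum fun i _ => sum_le_sum fun j _ => ?_
      exact kl_pt _ _ _ (hm i j) (hn0 i) (hn0 j) (hmn i j) (hsymm i j ▸ hmn j i)
    simp only [Finset.sum_add_distrib, Finset.sum_sub_distrib, hrow, hcol, hs, ← Finset.mul_sum, hn1, mul_one] at h1
    linarith
  have hlogdiv : ∑ j, ∑ k, m j k * Real.log (m j k / n j) = S - T := by
    rw [← hrow, hS, ← Finset.sum_sub_distrib]
    refine sum_congr rfl fun i _ => ?_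
    rw [← Finset.sum_sub_distrib]
    refine sum_congr rfl fun j _ => ?_
    rcases (hm i j).eq_or_lt with h | h
    · simp [← h]
    · rw [Real.log_div h.ne' (h.trans_le (hmn i j)).ne']; ring
  have hB : ∑ j, (n j * (-((e:ℝ)+2) * Real.log p - Kf e (fun k => m j k / n j) / (e+3))
        - ((e:ℝ)+2) * ∑ k, m j k * Real.log (m j k / n j)) =
      -((e:ℝ)+2) * Real.log p - ∑ j, n j * (Kf e (fun k => m j k / n j) / (e+3)) - ((e:ℝ)+2) * (S - T) := by
    simp only [mul_sub, Finset.sum_sub_distrib, ← Finset.sum_mul, hn1, ← Finset.mul_sum, hlogdiv]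
    ring
  rw [hB]
  have hnn : 0 ≤ ∑ i, ∑ j, (√(m i j) - √(n i) * √(n j))^2 :=
    sum_nonneg fun i _ => sum_nonneg fun j _ => sq_nonneg _
  have he : (0:ℝ) ≤ e := by positivity
  have h2 : 0 ≤ (e:ℝ) * (S - 2 * T) := mul_nonneg he (hnn.trans hKL)
  push_cast
  nlinarith

theorem arith_close (ω x y z : ℝ) (hω0 : 0 < ω) (hω1 : ω ≤ 1/30) (hx2 : |x - 1| ≤ ω)
    (hy2 : |y - 1| ≤ ω) (hz2 : |z - x * y| ≤ ω) : |z^2 - 1| ≤ 30 * ω := by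
  rw [abs_le] at hx2 hy2 hz2
  obtain ⟨hx1, hx2⟩ := hx2
  obtain ⟨hy1, hy2⟩ := hy2
  obtain ⟨hz1, hz2⟩ := hz2
  have hxy : |x * y - 1| ≤ 3 * ω := by
    rw [abs_le]; constructor <;> nlinarith
  rw [abs_le] at hxy
  have hz3 : |z - 1| ≤ 4 * ω := by
    rw [abs_le]; constructor <;> linarith [hxy.1, hxy.2]
  have h5 : |z + 1| ≤ 7 := by
    rw [abs_le] at *; constructor <;> linarith [hz3.1, hz3.2]
  rw [show z^2 - 1 = (z - 1) * (z + 1) by ring, abs_mul]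
  calc |z - 1| * |z + 1| ≤ (4 * ω) * 7 := by gcongr
    _ ≤ 30 * ω := by linarith

set_option maxHeartbeats 2000000 in
/-- Rate function bound (undirected case): for `d ≥ 3` there is `δ₀ > 0` such that for all
`δ ∈ (0, δ₀)` there is `c(δ) > 0` with: for every prime `p` with `gcd(p,d) = 1` and every
symmetric nonnegative `p×p` matrix `𝔪` with total sum `1`, setting `𝔫_i = Σ_j 𝔪_{ij}`,
if `max_{i,j} |𝔪_{ij} - 1/p²| > δ/p²` and `𝔪_{00} < 1 - δ/p`, then
`I(𝔪) = (d-1) ln p + (d/2) Σ_{ij} 𝔪_{ij} ln 𝔪_{ij} - Σ_j 𝔫_j ln 𝔫_j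
  + Σ_j inf_t (𝔫_j ln(p^{-(d-1)} Σ_{a ∈ Z_{d,p}} e^{⟨t,Φ(a)⟩}) - d⟨t,𝔪_j⟩)`
(the infima taken in the extended reals) is at most `-c(δ)/p²`.
(Here `Real.log 0 = 0` yields the convention `0 ln 0 = 0`.) -/
theorem undirected_rate_function_bound (d : ℕ) (hd : 3 ≤ d) :
    ∃ δ₀ : ℝ, 0 < δ₀ ∧ ∀ δ : ℝ, 0 < δ → δ < δ₀ → ∃ c : ℝ, 0 < c ∧
      ∀ (p : ℕ) [Fact p.Prime], Nat.gcd p d = 1 →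
        ∀ 𝔪 : ZMod p → ZMod p → ℝ,
        (∀ i j, 𝔪 i j = 𝔪 j i) → (∀ i j, 0 ≤ 𝔪 i j) →
        (∑ i : ZMod p, ∑ j : ZMod p, 𝔪 i j) = 1 →
        (∃ i j, δ / (p : ℝ) ^ 2 < |𝔪 i j - 1 / (p : ℝ) ^ 2|) →
        𝔪 0 0 < 1 - δ / p →
        ((((d : ℝ) - 1) * Real.log p
              + ((d : ℝ) / 2) * ∑ i : ZMod p, ∑ j : ZMod p, 𝔪 i j * Real.log (𝔪 i j)
              - ∑ j : ZMod p, (∑ k : ZMod p, 𝔪 j k) * Real.log (∑ k : ZMod p, 𝔪 j k)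
            : ℝ) : EReal)
          + ∑ j : ZMod p, ⨅ t : ZMod p → ℝ,
              (((∑ k : ZMod p, 𝔪 j k) *
                  Real.log ((p : ℝ) ^ (-((d : ℤ) - 1)) *
                    ∑ a ∈ Finset.univ.filter (fun a : Fin d → ZMod p => ∑ r, a r = 0),
                      Real.exp (∑ k : ZMod p, t k * (Phi a k : ℝ)))
                - (d : ℝ) * ∑ k : ZMod p, t k * 𝔪 j k : ℝ) : EReal)
          ≤ ((-c / (p : ℝ) ^ 2 : ℝ) : EReal) := by
  obtain ⟨e, rfl⟩ : ∃ e, d = e + 3 := ⟨d - 3, by omega⟩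
  refine ⟨1, one_pos, fun δ hδ0 hδ1 => ?_⟩
  set κ : ℝ := δ^2 / 1000000 * (1/2)^(e+3) with hκ
  have hκ0 : 0 < κ := by positivity
  have he3 : (0:ℝ) < (e:ℝ)+3 := by positivity
  refine ⟨κ / (e+3), by positivity, ?_⟩
  intro p _ hpe m hsymm hm hs hmax hm00
  have hp : (0:ℝ) < p := by exact_mod_cast (Fact.out : p.Prime).pos
  have hp1 : (1:ℝ) ≤ p := by exact_mod_cast (Fact.out : p.Prime).one_lt.le
  obtain ⟨n, hn⟩ : ∃ n : ZMod p → ℝ, ∀ j, n j = ∑ k, m j k := ⟨_, fun _ => rfl⟩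
  have hn1 : ∑ j, n j = 1 := by simp only [hn]; exact hs
  have hn0 : ∀ i, 0 ≤ n i := fun i => by rw [hn]; exact sum_nonneg fun k _ => hm i k
  simp only [← hn]
  refine (add_le_add le_rfl (Finset.sum_le_sum fun j _ => row_bound e (m j) (hm j) (n j) (hn j))).trans ?_
  have hcs : ∀ f : ZMod p → ℝ, ∑ j, ((f j : ℝ) : EReal) = ((∑ j, f j : ℝ) : EReal) := fun f =>
    (map_sum (⟨⟨fun x : ℝ => (x : EReal), EReal.coe_zero⟩, EReal.coe_add⟩ : ℝ →+ EReal) f univ).symm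
  rw [hcs, ← EReal.coe_add, EReal.coe_le_coe_iff]
  refine (real_bound e m hsymm hm hs n hn).trans ?_
  by_contra! hcon
  -- extraction of the consequences
  set Hl := ∑ i, ∑ j, (√(m i j) - √(n i) * √(n j))^2 with hHl
  set V := ∑ j, n j * (Kf e (fun k => m j k / n j) / (e+3)) with hV
  have hKn : ∀ j, 0 ≤ Kf e (fun k => m j k / n j) := fun j =>
    Kf_nonneg e _ fun k => div_nonneg (hm j k) (hn0 j)
  have hrow0 : ∀ i, 0 ≤ ∑ j, (√(m i j) - √(n i) * √(n j))^2 := fun i => sum_nonneg fun j _ => sq_nonneg _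
  have hHl0 : 0 ≤ Hl := sum_nonneg fun i _ => hrow0 i
  have hVt : ∀ j, 0 ≤ n j * (Kf e (fun k => m j k / n j) / (e+3)) := fun j =>
    mul_nonneg (hn0 j) (div_nonneg (hKn j) he3.le)
  have hV0 : 0 ≤ V := sum_nonneg fun j _ => hVt j
  have hck : κ / (e+3) ≤ κ := div_le_self hκ0.le (by linarith [(Nat.cast_nonneg e : (0:ℝ) ≤ e)])
  have htot : 1/2 * Hl + V < κ / (e+3) / p^2 := by
    rw [neg_div] at hcon; linarith
  have hHl1 : Hl ≤ 2 * κ / p^2 := by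
    have : κ / (e+3) / (p:ℝ)^2 ≤ κ / p^2 := by gcongr
    rw [mul_div_assoc]; linarith
  have hV1 : V ≤ κ / (e+3) / p^2 := by linarith
  have hent : ∀ i j, (√(m i j) - √(n i) * √(n j))^2 ≤ 2 * κ / p^2 := by
    intro i j
    refine le_trans ?_ ((single_le_sum (f := fun i => ∑ j, (√(m i j) - √(n i) * √(n j))^2) (fun i _ => hrow0 i) (mem_univ i)).trans hHl1)
    exact single_le_sum (f := fun j => (√(m i j) - √(n i) * √(n j))^2) (fun i _ => sq_nonneg _) (mem_univ j)
  obtain ⟨j, hj⟩ : ∃ j, 1 / (p:ℝ) ≤ n j := by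
    by_contra! h
    have : ∑ j, n j < ∑ j : ZMod p, 1/(p:ℝ) := sum_lt_sum_of_nonempty univ_nonempty fun j _ => h j
    rw [hn1] at this
    simp [ZMod.card, hp.ne'] at this
  have hnj : 0 < n j := lt_of_lt_of_le (by positivity) hj
  set q : ZMod p → ℝ := fun k => m j k / n j with hq
  have hq0 : ∀ k, 0 ≤ q k := fun k => div_nonneg (hm j k) (hn0 j)
  have hqs : ∑ k, q k = 1 := by
    simp only [hq]; rw [← Finset.sum_div, ← hn, div_self hnj.ne']
  have hKq : Kf e q ≤ κ / p := by
    have h1 : n j * (Kf e q / (e+3)) ≤ κ / (e+3) / p^2 :=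
      (single_le_sum (f := fun j => n j * (Kf e (fun k => m j k / n j) / (e+3))) (fun j _ => hVt j) (mem_univ j)).trans hV1
    have h2 : 1/p * (Kf e q / (e+3)) ≤ κ / (e+3) / p^2 :=
      le_trans (mul_le_mul_of_nonneg_right hj (div_nonneg (hKn j) he3.le)) h1
    rw [le_div_iff₀ hp]
    have h3 : 1/p * (Kf e q / (e+3)) = Kf e q * p / ((e+3) * p^2) := by field_simp
    rw [h3, div_div, div_le_div_iff_of_pos_right (by positivity)] at h2
    exact h2
  have hKqκ : Kf e q ≤ κ := hKq.trans (div_le_self hκ0.le hp1)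
  have hhell : ∑ k, (√(q k) - √(n k))^2 ≤ 2 * κ / p := by
    have h1 : ∑ k, (√(m j k) - √(n j) * √(n k))^2 ≤ 2 * κ / p^2 :=
      (single_le_sum (f := fun i => ∑ j, (√(m i j) - √(n i) * √(n j))^2) (fun i _ => hrow0 i) (mem_univ j)).trans hHl1
    have h2 : ∑ k, (√(m j k) - √(n j) * √(n k))^2 = n j * ∑ k, (√(q k) - √(n k))^2 := by
      rw [Finset.mul_sum]
      refine sum_congr rfl fun k _ => ?_
      have : m j k = n j * q k := by simp only [hq]; field_simp
      rw [this, Real.sqrt_mul (hn0 j), ← mul_sub, mul_pow, Real.sq_sqrt (hn0 j)]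
    rw [h2] at h1
    have h3 := (mul_le_mul_of_nonneg_right hj (sum_nonneg fun k _ => sq_nonneg (√(q k) - √(n k)))).trans h1
    rw [le_div_iff₀ hp]
    rw [one_div, inv_mul_eq_div, div_le_div_iff₀ hp (by positivity)] at h3
    rw [show 2 * κ * (p:ℝ) = (2 * κ) * p by ring, sq, ← mul_assoc] at h3
    exact le_of_mul_le_mul_right h3 hp
  have hpow : ((1:ℝ)/2)^(e+3) ≤ 1 := pow_le_one₀ (by norm_num) (by norm_num)
  have hpow0 : (0:ℝ) < ((1:ℝ)/2)^(e+3) := by positivity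
  have hκδ : κ ≤ δ^2 / 1000000 := mul_le_of_le_one_right (by positivity) hpow
  have hδ2 : δ^2 ≤ δ := by nlinarith
  have hκ2 : κ < (1/2)^(e+3) := by
    have : δ^2/1000000 < 1 := by linarith
    exact mul_lt_of_lt_one_left hpow0 this
  rcases K_stab e hpe q hq0 hqs (by linarith) (by linarith) with hA | hB
  · -- near uniform
    obtain ⟨i0, j0, hij⟩ := hmax
    set ω := δ / 30 with hω
    have hω0 : 0 < ω := by positivity
    set v := √(1/(p:ℝ)) with hv
    have hv0 : 0 < v := Real.sqrt_pos.2 (by positivity)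
    have hv2 : v^2 = 1/p := Real.sq_sqrt (by positivity)
    have hκω : κ ≤ ω^2 / 1000 := by
      have h1 : ω^2 / 1000 = δ^2 / 900000 := by rw [hω]; ring
      rw [h1]; linarith [sq_nonneg δ]
    have hnb : ∀ u, |√(n u) - v| ≤ ω * v := by
      intro u
      have h1 : |√(q u) - v| ≤ ω / 2 * v := by
        apply abs_le_of_sq_le_sq _ (by positivity)
        calc _ ≤ 8 * Kf e q := hA u
          _ ≤ 8 * κ / p := by rw [mul_div_assoc]; linarith
          _ ≤ 8 * (ω^2/1000) / p := by gcongr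
          _ ≤ (ω / 2 * v)^2 := by
            rw [mul_pow, hv2]
            have : 0 < ω^2 * (1/p) := by positivity
            have e1 : 8 * (ω^2/1000) / (p:ℝ) = 8/1000 * (ω^2 * (1/p)) := by ring
            rw [e1]; linarith [show (ω/2)^2 * (1/(p:ℝ)) = 1/4 * (ω^2 * (1/p)) by ring]
      have h2 : |√(q u) - √(n u)| ≤ ω / 2 * v := by
        apply abs_le_of_sq_le_sq _ (by positivity)
        calc _ ≤ ∑ k, (√(q k) - √(n k))^2 := single_le_sum (f := fun k => (√(q k) - √(n k))^2) (fun _ _ => sq_nonneg _) (mem_univ u)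
          _ ≤ 2 * κ / p := hhell
          _ ≤ 2 * (ω^2/1000) / p := by gcongr
          _ ≤ (ω / 2 * v)^2 := by
            rw [mul_pow, hv2]
            have : 0 < ω^2 * (1/p) := by positivity
            have e1 : 2 * (ω^2/1000) / (p:ℝ) = 2/1000 * (ω^2 * (1/p)) := by ring
            rw [e1]; linarith [show (ω/2)^2 * (1/(p:ℝ)) = 1/4 * (ω^2 * (1/p)) by ring]
      rw [abs_le] at h1 h2 ⊢
      constructor <;> linarith [h1.1, h1.2, h2.1, h2.2]
    have hmb : |√(m i0 j0) - √(n i0) * √(n j0)| ≤ ω * v^2 := by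
      apply abs_le_of_sq_le_sq _ (by positivity)
      calc _ ≤ 2 * κ / p^2 := hent i0 j0
        _ ≤ 2 * (ω^2/1000) / p^2 := by gcongr
        _ ≤ (ω * v^2)^2 := by
            rw [mul_pow, hv2]
            have : 0 < ω^2 * (1/p)^2 := by positivity
            have e1 : 2 * (ω^2/1000) / (p:ℝ)^2 = 2/1000 * (ω^2 * (1/p)^2) := by ring
            rw [e1]; linarith
    -- normalise
    have hω1 : ω ≤ 1/30 := by rw [hω]; linarith
    obtain ⟨x, hx⟩ : ∃ x, √(n i0) = x * v := ⟨√(n i0) / v, by field_simp⟩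
    obtain ⟨y, hy⟩ : ∃ y, √(n j0) = y * v := ⟨√(n j0) / v, by field_simp⟩
    obtain ⟨z, hz⟩ : ∃ z, √(m i0 j0) = z * v^2 := ⟨√(m i0 j0) / v^2, by field_simp⟩
    have hx1 := hnb i0
    have hy1 := hnb j0
    rw [hx, show x * v - v = (x - 1) * v by ring, abs_mul, abs_of_pos hv0] at hx1
    rw [hy, show y * v - v = (y - 1) * v by ring, abs_mul, abs_of_pos hv0] at hy1
    rw [hx, hy, hz, show z * v^2 - x * v * (y * v) = (z - x * y) * v^2 by ring, abs_mul,
      abs_of_pos (by positivity : 0 < v^2)] at hmb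
    have hx2 := le_of_mul_le_mul_right hx1 hv0
    have hy2 := le_of_mul_le_mul_right hy1 hv0
    have hz2 := le_of_mul_le_mul_right hmb (by positivity : 0 < v^2)
    have hmz : m i0 j0 = z^2 * (1/p^2) := by
      rw [← Real.sq_sqrt (hm i0 j0), hz, mul_pow, hv2]; ring
    rw [hmz, show z^2 * (1/(p:ℝ)^2) - 1/(p:ℝ)^2 = (z^2 - 1) * (1/(p:ℝ)^2) by ring, abs_mul,
      abs_of_pos (by positivity : (0:ℝ) < 1/(p:ℝ)^2), show δ / (p:ℝ)^2 = δ * (1/(p:ℝ)^2) by ring] at hij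
    have hfin := lt_of_mul_lt_mul_right hij (by positivity : (0:ℝ) ≤ 1/(p:ℝ)^2)
    have hδω : δ = 30 * ω := by rw [hω]; ring
    have := arith_close ω x y z hω0 hω1 hx2 hy2 hz2
    linarith
  · -- near the point mass at zero
    have hsplit : ∀ f : ZMod p → ℝ, ∑ k, f k = f 0 + ∑ k ∈ univ.erase 0, f k := fun f =>
      (Finset.add_sum_erase univ f (mem_univ 0)).symm
    have h1 : ∑ k ∈ univ.erase 0, n k ≤ 2 * (2 * κ / p) + 2 * (4000 * Kf e q) := by
      calc ∑ k ∈ univ.erase 0, n k ≤ ∑ k ∈ univ.erase 0, (2 * (√(q k) - √(n k))^2 + 2 * q k) := by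
            refine sum_le_sum fun k _ => ?_
            have e1 := Real.sq_sqrt (hn0 k)
            have e2 := Real.sq_sqrt (hq0 k)
            nlinarith [sq_nonneg (2 * √(q k) - √(n k))]
        _ = 2 * ∑ k ∈ univ.erase 0, (√(q k) - √(n k))^2 + 2 * ∑ k ∈ univ.erase 0, q k := by
            rw [Finset.sum_add_distrib, ← Finset.mul_sum, ← Finset.mul_sum]
        _ ≤ _ := by
            have a1 := hsplit (fun k => (√(q k) - √(n k))^2)
            have a2 := hsplit q
            have a3 := sq_nonneg (√(q 0) - √(n 0))
            rw [hqs] at a2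
            have a4 : ∑ k ∈ univ.erase 0, (√(q k) - √(n k))^2 ≤ 2 * κ / p := by linarith
            have a5 : ∑ k ∈ univ.erase 0, q k ≤ 4000 * Kf e q := by linarith
            linarith
    have h2 : ∑ k ∈ univ.erase 0, m 0 k ≤ ∑ k ∈ univ.erase 0, n k := by
      refine sum_le_sum fun k _ => ?_
      rw [hsymm, hn]
      exact single_le_sum (f := fun j => m k j) (fun j _ => hm k j) (mem_univ 0)
    have h3 := hsplit n
    have h4 := hsplit (m 0)
    rw [hn1] at h3
    rw [← hn] at h4
    have h5 : 1 - m 0 0 ≤ 16008 * (κ / p) := by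
      have : 2 * κ / (p:ℝ) = 2 * (κ / p) := by ring
      linarith
    have h6 : 16008 * (κ / p) ≤ δ / p := by
      rw [← mul_div_assoc]; gcongr; linarith
    linarith
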